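/- arXiv:math/0404097 — 3 statements merged into one kernel-verified Lean document; each statement's English description precedes it below -/
import Mathlib

section
/- Let X : [0,∞) × Ω → ℝ be a jointly measurable stochastic process on a probability space (Ω, F, P), and set X̄_t := t⁻¹ ∫₀ᵗ X_s ds. Suppose that for every t > 0 the pair (X_t, X̄_t) has the same joint distribution as (X_1, X̄_1), and that E|X_1| < ∞. Then for every t > 0, the conditional expectation of X_t given the σ-algebra generated by X̄_t equals X̄_t almost surely: E(X_t | σ(X̄_t)) = X̄_t a.s. -/
open MeasureTheory ProbabilityTheory

/-!
For an integrable path `x`, the average `m t = t⁻¹ ∫₀ᵗ x` is absolutely continuous on compact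
subintervals of `(0, ∞)` and `m' t = t⁻¹ (x t - m t)` almost everywhere. Hence, for a continuous
`g` with primitive `G`, the integral of `t⁻¹ g (m t) (x t - m t)` over `[1, 2]` is
`G (m 2) - G (m 1)`. Taking expectations over the paths of `X`, the right-hand side vanishes
because `X̄_2` and `X̄_1` have the same law, whereas on the left `E[g(X̄_t) (X_t - X̄_t)]` does not
depend on `t` and comes out with the factor `log 2`. So `X_t - X̄_t` is orthogonal to every bounded
continuous function of `X̄_t`.
-/

section AbsolutelyContinuous

open Set Filter

variable {a b : ℝ}

theorem absolutelyContinuousOnInterval_lipschitzOnWith_comp {E F : Type*} [PseudoMetricSpace E]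
    [PseudoMetricSpace F] {f : ℝ → E} {G : E → F} {K : NNReal}
    (hG : LipschitzOnWith K G (f '' uIcc a b)) (hf : AbsolutelyContinuousOnInterval f a b) :
    AbsolutelyContinuousOnInterval (G ∘ f) a b := by
  refine squeeze_zero' (.of_forall fun I => Finset.sum_nonneg fun _ _ => dist_nonneg) ?_
    (by simpa using Tendsto.const_mul (K : ℝ) hf)
  filter_upwards [mem_inf_of_right (mem_principal_self _)] with I hI
  rw [Finset.mul_sum]
  exact Finset.sum_le_sum fun i hi => hG.dist_le_mul _ (mem_image_of_mem f (hI.1 i hi).1) _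
    (mem_image_of_mem f (hI.1 i hi).2)

theorem intervalIntegral_comp_mul_deriv_of_absolutelyContinuousOnInterval {f g : ℝ → ℝ}
    (hf : AbsolutelyContinuousOnInterval f a b) (hg : Continuous g) :
    ∫ t in a..b, g (f t) * deriv f t = ∫ x in f a..f b, g x := by
  set G : ℝ → ℝ := fun y => ∫ x in (0 : ℝ)..y, g x
  have hG (y : ℝ) : HasDerivAt G (g y) y := (hg.integral_hasStrictDerivAt 0 y).hasDerivAt
  have hG_locallyLipschitz : LocallyLipschitz G :=
    (contDiff_one_iff_deriv.2 ⟨fun y => (hG y).differentiableAt,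
      by rwa [funext fun y => (hG y).deriv]⟩).locallyLipschitz
  obtain ⟨K, hK⟩ := hG_locallyLipschitz.locallyLipschitzOn.exists_lipschitzOnWith_of_compact
    (isCompact_uIcc.image_of_continuousOn hf.continuousOn)
  calc ∫ t in a..b, g (f t) * deriv f t = ∫ t in a..b, deriv (G ∘ f) t := by
        refine intervalIntegral.integral_congr_ae ?_
        filter_upwards [hf.ae_differentiableAt] with t ht htab
        exact ((hG _).comp t (ht (uIoc_subset_uIcc htab)).hasDerivAt).deriv.symm
    _ = G (f b) - G (f a) :=
        (absolutelyContinuousOnInterval_lipschitzOnWith_comp hK hf).integral_deriv_eq_sub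
    _ = ∫ x in f a..f b, g x := intervalIntegral.integral_interval_sub_left
        (hg.intervalIntegrable _ _) (hg.intervalIntegrable _ _)

end AbsolutelyContinuous

section TimeAverage

open Set

/-- The average `t⁻¹ ∫₀ᵗ f` of a path over `[0, t]`; it is the junk value `0` at `t = 0`. -/
noncomputable def timeAverage (f : ℝ → ℝ) (t : ℝ) : ℝ := t⁻¹ * ∫ s in (0 : ℝ)..t, f s

variable {f : ℝ → ℝ} {a b : ℝ}

theorem absolutelyContinuousOnInterval_timeAverage (hf : IntervalIntegrable f volume 0 b)
    (ha : 0 < a) (hab : a ≤ b) : AbsolutelyContinuousOnInterval (timeAverage f) a b := by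
  have h_inv : AbsolutelyContinuousOnInterval (fun t : ℝ => t⁻¹) a b := by
    refine ContDiffOn.absolutelyContinuousOnInterval fun t ht => ?_
    rw [uIcc_of_le hab] at ht
    exact (contDiffAt_inv ℝ (ha.trans_le ht.1).ne').contDiffWithinAt
  have h_primitive : AbsolutelyContinuousOnInterval (fun t => ∫ s in (0 : ℝ)..t, f s) a b :=
    (hf.absolutelyContinuousOnInterval_intervalIntegral left_mem_uIcc).mono
      (uIcc_subset_uIcc_right (mem_uIcc_of_le ha.le hab))
  exact h_inv.mul h_primitive

theorem ae_hasDerivAt_timeAverage (hf : IntervalIntegrable f volume 0 b) :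
    ∀ᵐ t, t ∈ uIoc 0 b → HasDerivAt (timeAverage f) (t⁻¹ * (f t - timeAverage f t)) t := by
  filter_upwards [hf.ae_hasDerivAt_integral, Measure.ae_ne volume (0 : ℝ)] with t ht ht0 htb
  refine ((hasDerivAt_inv ht0).mul (ht (uIoc_subset_uIcc htb) 0 left_mem_uIcc)).congr_deriv ?_
  rw [timeAverage]
  field_simp
  ring

theorem intervalIntegral_inv_mul_comp_timeAverage {g : ℝ → ℝ} (hf : IntervalIntegrable f volume 0 b)
    (ha : 0 < a) (hab : a ≤ b) (hg : Continuous g) :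
    ∫ t in a..b, t⁻¹ * (g (timeAverage f t) * (f t - timeAverage f t))
      = ∫ x in timeAverage f a..timeAverage f b, g x := by
  rw [← intervalIntegral_comp_mul_deriv_of_absolutelyContinuousOnInterval
    (absolutelyContinuousOnInterval_timeAverage hf ha hab) hg]
  refine intervalIntegral.integral_congr_ae ?_
  filter_upwards [ae_hasDerivAt_timeAverage hf] with t ht htab
  rw [uIoc_of_le hab] at htab
  have ht0b : t ∈ uIoc 0 b := by
    rw [uIoc_of_le (ha.le.trans hab)]
    exact Ioc_subset_Ioc_left ha.le htab
  rw [(ht ht0b).deriv]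
  ring

theorem timeAverage_eq_integral_comp_mul (f : ℝ → ℝ) {t : ℝ} (ht : t ≠ 0) :
    timeAverage f t = ∫ u in (0 : ℝ)..1, f (t * u) := by
  rw [intervalIntegral.integral_comp_mul_left f ht, mul_zero, mul_one, smul_eq_mul, timeAverage]

/-- Rescaling to the fixed interval `[0, 1]` makes this measurability of a parametric integral. -/
theorem measurable_timeAverage {Ω : Type*} [MeasurableSpace Ω] {X : ℝ → Ω → ℝ}
    (hX : Measurable fun p : ℝ × Ω => X p.1 p.2) :
    Measurable fun p : ℝ × Ω => timeAverage (X · p.2) p.1 := by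
  have h_rescaled : Measurable fun p : ℝ × Ω => ∫ u in (0 : ℝ)..1, X (p.1 * u) p.2 := by
    simp only [intervalIntegral.integral_of_le zero_le_one]
    have h_comp : Measurable fun q : (ℝ × Ω) × ℝ => X (q.1.1 * q.2) q.1.2 :=
      hX.comp (by fun_prop : Measurable fun q : (ℝ × Ω) × ℝ => (q.1.1 * q.2, q.1.2))
    exact h_comp.stronglyMeasurable.integral_prod_right'.measurable
  have h_eq : (fun p : ℝ × Ω => timeAverage (X · p.2) p.1)
      = fun p => if p.1 = 0 then 0 else ∫ u in (0 : ℝ)..1, X (p.1 * u) p.2 := by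
    ext p
    split_ifs with hp
    · rw [hp, timeAverage, inv_zero, zero_mul]
    · exact timeAverage_eq_integral_comp_mul _ hp
  rw [h_eq]
  exact .ite (measurable_fst (measurableSet_singleton 0)) measurable_const h_rescaled

end TimeAverage

section IdentDistrib

variable {Ω E : Type*} [MeasurableSpace Ω] {P : Measure Ω} [NormedAddCommGroup E] [NormedSpace ℝ E]

theorem integral_intervalIntegral_eq_zero_of_identDistrib {U V : Ω → ℝ} {g : ℝ → E} {C : ℝ}
    (hUV : IdentDistrib U V P P) (hU : Integrable U P) (hg : Continuous g) (hgC : ∀ x, ‖g x‖ ≤ C) :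
    ∫ ω, (∫ x in U ω..V ω, g x) ∂P = 0 := by
  borelize E
  set G : ℝ → E := fun y => ∫ x in (0 : ℝ)..y, g x
  have hg_int (y z : ℝ) : IntervalIntegrable g volume y z := hg.intervalIntegrable y z
  have hG : Continuous G := intervalIntegral.continuous_primitive hg_int 0
  have hG_le (y : ℝ) : ‖G y‖ ≤ C * ‖y‖ := by
    simpa using intervalIntegral.norm_integral_le_of_norm_le_const (a := 0) (b := y)
      fun x _ => hgC x
  have hGUV : IdentDistrib (G ∘ U) (G ∘ V) P P := hUV.comp hG.measurable
  have hG_int {Y : Ω → ℝ} (hY : Integrable Y P) : Integrable (G ∘ Y) P :=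
    (hY.norm.const_mul C).mono' (hG.comp_aestronglyMeasurable hY.1)
      (.of_forall fun ω => hG_le (Y ω))
  calc ∫ ω, (∫ x in U ω..V ω, g x) ∂P = ∫ ω, ((G ∘ V) ω - (G ∘ U) ω) ∂P := by
        simp only [G, Function.comp_apply,
          intervalIntegral.integral_interval_sub_left (hg_int _ _) (hg_int _ _)]
    _ = 0 := by
        rw [integral_sub (hG_int (hUV.integrable_iff.1 hU)) (hG_int hU), hGUV.integral_eq, sub_self]

variable {T : Type*} [MeasurableSpace T] {μ : Measure T} [SFinite P] [MeasurableSpace E]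
  [BorelSpace E] {F : T → Ω → E} {Z : Ω → E} {h : T → ℝ}

theorem integrable_prod_smul_of_ae_identDistrib
    (hF : AEStronglyMeasurable (fun p : T × Ω => F p.1 p.2) (μ.prod P))
    (hFZ : ∀ᵐ t ∂μ, IdentDistrib (F t) Z P P) (hZ : Integrable Z P) (hh : Integrable h μ) :
    Integrable (fun p : T × Ω => h p.1 • F p.1 p.2) (μ.prod P) := by
  refine (integrable_prod_iff (hh.1.comp_fst.smul hF)).2 ⟨?_, ?_⟩
  · filter_upwards [hFZ] with t ht using (ht.integrable_iff.2 hZ).smul (h t)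
  · refine (hh.norm.mul_const (∫ ω, ‖Z ω‖ ∂P)).congr ?_
    filter_upwards [hFZ] with t ht
    calc ‖h t‖ * ∫ ω, ‖Z ω‖ ∂P = ‖h t‖ * ∫ ω, ‖F t ω‖ ∂P :=
          congrArg _ (ht.comp measurable_norm).integral_eq.symm
      _ = ∫ ω, ‖h t • F t ω‖ ∂P := by simp only [norm_smul, integral_const_mul]

theorem integral_integral_smul_of_ae_identDistrib [CompleteSpace E] [SFinite μ]
    (hF : AEStronglyMeasurable (fun p : T × Ω => F p.1 p.2) (μ.prod P))
    (hFZ : ∀ᵐ t ∂μ, IdentDistrib (F t) Z P P) (hZ : Integrable Z P) (hh : Integrable h μ) :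
    ∫ ω, ∫ t, h t • F t ω ∂μ ∂P = (∫ t, h t ∂μ) • ∫ ω, Z ω ∂P := by
  rw [← integral_integral_swap (integrable_prod_smul_of_ae_identDistrib hF hFZ hZ hh),
    ← integral_smul_const]
  refine integral_congr_ae ?_
  filter_upwards [hFZ] with t ht
  rw [integral_smul, ht.integral_eq]

end IdentDistrib

section CondExp

variable {Ω : Type*} [MeasurableSpace Ω] {P : Measure Ω}

theorem sigmaFinite_trim_comap {E : Type*} [mE : MeasurableSpace E] {Y : Ω → E} (hY : Measurable Y)
    [hσ : SigmaFinite (P.map Y)] : SigmaFinite (P.trim hY.comap_le) := by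
  rw [← map_trim_comap hY] at hσ
  exact .of_map _ (comap_measurable Y).aemeasurable hσ

theorem condExp_comap_ae_eq_zero_of_integral_contDiff_smul_eq_zero {E F : Type*}
    [NormedAddCommGroup E] [NormedSpace ℝ E] [FiniteDimensional ℝ E] [mE : MeasurableSpace E]
    [BorelSpace E] [NormedAddCommGroup F] [NormedSpace ℝ F] [CompleteSpace F] {Y : Ω → E}
    {W : Ω → F} (hY : Measurable Y) [SigmaFinite (P.map Y)] (hW : Integrable W P)
    (h : ∀ g : E → ℝ, ContDiff ℝ (⊤ : ℕ∞) g → HasCompactSupport g → ∫ ω, g (Y ω) • W ω ∂P = 0) :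
    P[W | mE.comap Y] =ᵐ[P] 0 := by
  have := sigmaFinite_trim_comap (P := P) hY
  obtain ⟨e, he_meas, he⟩ :=
    (stronglyMeasurable_condExp (f := W) (μ := P) (m := mE.comap Y)).exists_eq_measurable_comp
  have he_int : Integrable e (P.map Y) :=
    (integrable_map_measure he_meas.aestronglyMeasurable hY.aemeasurable).2
      (he ▸ integrable_condExp)
  suffices he_zero : ∀ᵐ y ∂P.map Y, e y = 0 by
    rw [he]
    exact ae_of_ae_map hY.aemeasurable he_zero
  refine ae_eq_zero_of_integral_contDiff_smul_eq_zero he_int.locallyIntegrable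
    fun g hg hg_supp => ?_
  obtain ⟨C, hC⟩ := hg_supp.exists_bound_of_continuous hg.continuous
  have hgY : StronglyMeasurable[mE.comap Y] (g ∘ Y) :=
    hg.continuous.stronglyMeasurable.comp_measurable (comap_measurable Y)
  have hgYW : Integrable (g ∘ Y • W) P := hW.bdd_smul C
    (hgY.mono hY.comap_le).aestronglyMeasurable (.of_forall fun ω => hC (Y ω))
  calc ∫ y, g y • e y ∂P.map Y = ∫ ω, (g ∘ Y • P[W | mE.comap Y]) ω ∂P := by
        rw [he]
        exact integral_map hY.aemeasurable
          (hg.continuous.stronglyMeasurable.smul he_meas).aestronglyMeasurable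
    _ = ∫ ω, P[g ∘ Y • W | mE.comap Y] ω ∂P := integral_congr_ae
        (condExp_smul_of_aestronglyMeasurable_left hgY.aestronglyMeasurable hgYW hW).symm
    _ = ∫ ω, g (Y ω) • W ω ∂P := integral_condExp hY.comap_le
    _ = 0 := h g hg hg_supp

end CondExp

/-- The law of the pair formed by the value `X_t` of a process and its running average
`t⁻¹ ∫₀ᵗ X_s ds` is the same for all `t > 0`. -/
def IdentDistribWithAverage {Ω : Type*} [MeasurableSpace Ω] (X : ℝ → Ω → ℝ) (P : Measure Ω) :
    Prop :=
  ∀ ⦃t : ℝ⦄, 0 < t → IdentDistrib (fun ω => (X t ω, timeAverage (X · ω) t))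
    (fun ω => (X 1 ω, timeAverage (X · ω) 1)) P P

namespace IdentDistribWithAverage

variable {Ω : Type*} [MeasurableSpace Ω] {X : ℝ → Ω → ℝ} {P : Measure Ω} {t : ℝ}

theorem identDistrib (h : IdentDistribWithAverage X P) (ht : 0 < t) :
    IdentDistrib (X t) (X 1) P P :=
  (h ht).comp measurable_fst

theorem identDistrib_timeAverage (h : IdentDistribWithAverage X P) (ht : 0 < t) :
    IdentDistrib (fun ω => timeAverage (X · ω) t) (fun ω => timeAverage (X · ω) 1) P P :=
  (h ht).comp measurable_snd

theorem integrable (h : IdentDistribWithAverage X P) (hint : Integrable (X 1) P) (ht : 0 < t) :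
    Integrable (X t) P :=
  (h.identDistrib ht).integrable_iff.2 hint

variable [SFinite P]

theorem integrable_prod (h : IdentDistribWithAverage X P)
    (hX : Measurable fun p : ℝ × Ω => X p.1 p.2) (hint : Integrable (X 1) P) (t : ℝ) :
    Integrable (fun p : ℝ × Ω => X p.1 p.2) ((volume.restrict (Set.Ioc 0 t)).prod P) := by
  simpa only [one_smul] using integrable_prod_smul_of_ae_identDistrib (h := fun _ => (1 : ℝ))
    hX.aestronglyMeasurable
    ((ae_restrict_mem measurableSet_Ioc).mono fun s hs => h.identDistrib hs.1) hint
    (integrable_const 1)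

theorem ae_intervalIntegrable (h : IdentDistribWithAverage X P)
    (hX : Measurable fun p : ℝ × Ω => X p.1 p.2) (hint : Integrable (X 1) P) (ht : 0 ≤ t) :
    ∀ᵐ ω ∂P, IntervalIntegrable (X · ω) volume 0 t := by
  filter_upwards [(h.integrable_prod hX hint t).prod_left_ae] with ω hω
  exact (intervalIntegrable_iff_integrableOn_Ioc_of_le ht).2 hω

theorem integrable_timeAverage (h : IdentDistribWithAverage X P)
    (hX : Measurable fun p : ℝ × Ω => X p.1 p.2) (hint : Integrable (X 1) P) (ht : 0 ≤ t) :
    Integrable (fun ω => timeAverage (X · ω) t) P := by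
  simp only [timeAverage, intervalIntegral.integral_of_le ht]
  exact (h.integrable_prod hX hint t).integral_prod_right.const_mul t⁻¹

theorem integral_comp_timeAverage_mul_sub_eq_zero (h : IdentDistribWithAverage X P)
    (hX : Measurable fun p : ℝ × Ω => X p.1 p.2) (hint : Integrable (X 1) P) {g : ℝ → ℝ} {C : ℝ}
    (hg : Continuous g) (hgC : ∀ x, ‖g x‖ ≤ C) (ht : 0 < t) :
    ∫ ω, g (timeAverage (X · ω) t) * (X t ω - timeAverage (X · ω) t) ∂P = 0 := by
  set m : ℝ → Ω → ℝ := fun t ω => timeAverage (X · ω) t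
  set D : ℝ → Ω → ℝ := fun t ω => g (m t ω) * (X t ω - m t ω)
  have hm : Measurable fun p : ℝ × Ω => m p.1 p.2 := measurable_timeAverage hX
  have hm_int {s : ℝ} (hs : 0 < s) : Integrable (m s) P := h.integrable_timeAverage hX hint hs.le
  have hD_ident {s : ℝ} (hs : 0 < s) : IdentDistrib (D s) (D 1) P P :=
    (h hs).comp (by fun_prop : Measurable fun p : ℝ × ℝ => g p.2 * (p.1 - p.2))
  have hD_int : Integrable (D 1) P := (hint.sub (hm_int one_pos)).bdd_mul (c := C)
    (hg.comp_aestronglyMeasurable (hm_int one_pos).1) (.of_forall fun ω => hgC (m 1 ω))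
  have h_log : (∫ s in (1 : ℝ)..2, s⁻¹) = Real.log 2 := by
    rw [integral_inv_of_pos one_pos two_pos, div_one]
  have h_inv_int : IntegrableOn (fun s : ℝ => s⁻¹) (Set.Ioc 1 2) :=
    (intervalIntegrable_iff_integrableOn_Ioc_of_le one_le_two).1
      (intervalIntegral.intervalIntegrable_of_integral_ne_zero
        (h_log ▸ (Real.log_pos one_lt_two).ne'))
  have h_log_mul : Real.log 2 * ∫ ω, D 1 ω ∂P = 0 :=
    calc Real.log 2 * ∫ ω, D 1 ω ∂P = ∫ ω, (∫ s in (1 : ℝ)..2, s⁻¹ * D s ω) ∂P := by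
          simp only [← h_log, intervalIntegral.integral_of_le (one_le_two (α := ℝ))]
          exact (integral_integral_smul_of_ae_identDistrib
            (by fun_prop : Measurable fun p : ℝ × Ω => D p.1 p.2).aestronglyMeasurable
            ((ae_restrict_mem measurableSet_Ioc).mono fun s hs => hD_ident (one_pos.trans hs.1))
            hD_int h_inv_int).symm
      _ = ∫ ω, (∫ x in m 1 ω..m 2 ω, g x) ∂P := by
          refine integral_congr_ae ?_
          filter_upwards [h.ae_intervalIntegrable hX hint zero_le_two] with ω hω
          exact intervalIntegral_inv_mul_comp_timeAverage hω one_pos one_le_two hg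
      _ = 0 := integral_intervalIntegral_eq_zero_of_identDistrib
          (h.identDistrib_timeAverage two_pos).symm (hm_int one_pos) hg hgC
  rw [(hD_ident ht).integral_eq]
  exact (mul_eq_zero.1 h_log_mul).resolve_left (Real.log_pos one_lt_two).ne'

theorem condExp_ae_eq_timeAverage (h : IdentDistribWithAverage X P)
    (hX : Measurable fun p : ℝ × Ω => X p.1 p.2) (hint : Integrable (X 1) P)
    [SigmaFinite (P.map fun ω => timeAverage (X · ω) 1)] (ht : 0 < t) :
    P[X t | MeasurableSpace.comap (fun ω => timeAverage (X · ω) t) inferInstance]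
      =ᵐ[P] fun ω => timeAverage (X · ω) t := by
  have hm : Measurable fun ω => timeAverage (X · ω) t :=
    (measurable_timeAverage hX).comp measurable_prodMk_left
  have : SigmaFinite (P.map fun ω => timeAverage (X · ω) t) := by
    rwa [(h.identDistrib_timeAverage ht).map_eq]
  have := sigmaFinite_trim_comap (P := P) hm
  have hX_int := h.integrable hint ht
  have hm_int := h.integrable_timeAverage hX hint ht.le
  have h_sub_zero := condExp_comap_ae_eq_zero_of_integral_contDiff_smul_eq_zero hm
    (hX_int.sub hm_int) fun g hg hg_supp => by
      obtain ⟨C, hC⟩ := hg_supp.exists_bound_of_continuous hg.continuous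
      exact h.integral_comp_timeAverage_mul_sub_eq_zero hX hint hg.continuous hC ht
  filter_upwards [h_sub_zero, condExp_sub hX_int hm_int _] with ω h_zero h_sub
  rw [h_sub, Pi.sub_apply, condExp_of_stronglyMeasurable hm.comap_le
    (comap_measurable _).stronglyMeasurable hm_int] at h_zero
  exact sub_eq_zero.1 h_zero

end IdentDistribWithAverage

theorem statement0_general
    {Ω : Type*} [MeasurableSpace Ω] (P : Measure Ω)
    (X : ℝ → Ω → ℝ)
    (hX : Measurable fun p : ℝ × Ω => X p.1 p.2)
    (Xbar : ℝ → Ω → ℝ)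
    (hXbar : ∀ t ω, Xbar t ω = t⁻¹ * ∫ s in (0:ℝ)..t, X s ω)
    [SigmaFinite (P.map (Xbar 1))]
    (hss : ∀ t : ℝ, 0 < t →
      Measure.map (fun ω => (X t ω, Xbar t ω)) P
        = Measure.map (fun ω => (X 1 ω, Xbar 1 ω)) P)
    (hint : Integrable (X 1) P) :
    ∀ t : ℝ, 0 < t →
      P[X t | MeasurableSpace.comap (Xbar t) inferInstance] =ᵐ[P] Xbar t := by
  obtain rfl : Xbar = fun t ω => timeAverage (X · ω) t := funext₂ hXbar
  have h_pair (t : ℝ) : Measurable fun ω => (X t ω, timeAverage (X · ω) t) :=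
    (hX.prodMk (measurable_timeAverage hX)).comp measurable_prodMk_left
  have : SigmaFinite P := .of_map P (h_pair 1).snd.aemeasurable ‹_›
  have h : IdentDistribWithAverage X P := fun t ht =>
    ⟨(h_pair t).aemeasurable, (h_pair 1).aemeasurable, hss t ht⟩
  exact fun t ht => h.condExp_ae_eq_timeAverage hX hint ht

/-- Let `X : [0,∞) × Ω → ℝ` be a jointly measurable process on a
probability space, and `X̄_t := t⁻¹ ∫₀ᵗ X_s ds`.  If for every `t > 0` the pair
`(X_t, X̄_t)` has the same joint law as `(X_1, X̄_1)` and `E|X_1| < ∞`, then for every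
`t > 0`, `E(X_t | σ(X̄_t)) = X̄_t` a.s. -/
theorem statement0
    {Ω : Type*} [MeasurableSpace Ω] (P : Measure Ω) [IsProbabilityMeasure P]
    (X : ℝ → Ω → ℝ)
    (hX : Measurable fun p : ℝ × Ω => X p.1 p.2)
    (Xbar : ℝ → Ω → ℝ)
    (hXbar : ∀ t ω, Xbar t ω = t⁻¹ * ∫ s in (0:ℝ)..t, X s ω)
    (hss : ∀ t : ℝ, 0 < t →
      Measure.map (fun ω => (X t ω, Xbar t ω)) P
        = Measure.map (fun ω => (X 1 ω, Xbar 1 ω)) P)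
    (hint : Integrable (X 1) P) :
    ∀ t : ℝ, 0 < t →
      P[X t | MeasurableSpace.comap (Xbar t) inferInstance] =ᵐ[P] Xbar t :=
  statement0_general P X hX Xbar hXbar hss hint
end

section
/- Let Y : [0,∞) × Ω → ℝ^d be a jointly measurable β-self-similar process, let C ⊆ ℝ^d be a Borel cone, and set V_t := ∫₀ᵗ 1_{Y_s ∈ C} ds. Then for every t > 0 and every bounded measurable function g : ℝ → ℝ, E[g(V_t) · 1_{Y_t ∈ C}] = t⁻¹ · E[V_t · g(V_t)]. (Equivalently, by Bayes' rule, the conditional law of V_t given the event {Y_t ∈ C} has density v/(t·P(Y_t ∈ C)) with respect to the unconditional law of V_t, whenever P(Y_t ∈ C) > 0.) -/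
open MeasureTheory ProbabilityTheory

/-!
Let `X` be a bounded process whose finite-dimensional distributions are invariant under time
scaling, such as a function of a self-similar process which is homogeneous of degree zero, and let
`V t = ∫₀ᵗ X s ds`. Then `E[X t | V t] = V t / t`, and integrating this against `g (V t)` gives the
theorem.

As `V t` is bounded, it suffices to compare moments against powers of `V t`. Expanding the power as
an `n`-fold time integral and rescaling time gives `E[V s ^ n * X s] = s ^ n * E[V 1 ^ n * X 1]`. On
the other hand `V' = X` almost everywhere, so that
`V t ^ (n + 1) = (n + 1) * ∫₀ᵗ V s ^ n * X s ds`; taking expectations, the right-hand side becomes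
`t * E[V t ^ n * X t]`.
-/

section Moments

variable {Ω : Type*} {mΩ : MeasurableSpace Ω} {P : Measure Ω} {a b : ℝ} {V D : Ω → ℝ}

lemma integrable_continuous_comp_mul_of_mem_Icc (hV : Measurable V)
    (hVab : ∀ᵐ ω ∂P, V ω ∈ Set.Icc a b) (hD : Integrable D P) {f : ℝ → ℝ} (hf : Continuous f) :
    Integrable (fun ω => f (V ω) * D ω) P := by
  obtain ⟨M, hM⟩ := (isCompact_Icc (a := a) (b := b)).exists_bound_of_continuousOn hf.continuousOn
  exact hD.bdd_mul (hf.measurable.comp hV).aestronglyMeasurable (hVab.mono fun ω hω => hM _ hω)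

lemma integral_polynomial_comp_mul_eq_zero (hV : Measurable V)
    (hVab : ∀ᵐ ω ∂P, V ω ∈ Set.Icc a b) (hD : Integrable D P)
    (hmom : ∀ n : ℕ, ∫ ω, V ω ^ n * D ω ∂P = 0) (p : Polynomial ℝ) :
    ∫ ω, p.eval (V ω) * D ω ∂P = 0 := by
  induction p using Polynomial.induction_on' with
  | add p q hp hq =>
    simp only [Polynomial.eval_add, add_mul]
    rw [integral_add (integrable_continuous_comp_mul_of_mem_Icc hV hVab hD p.continuous)
      (integrable_continuous_comp_mul_of_mem_Icc hV hVab hD q.continuous), hp, hq, add_zero]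
  | monomial n c =>
    simp only [Polynomial.eval_monomial, mul_assoc]
    rw [integral_const_mul, hmom, mul_zero]

lemma integral_continuous_comp_mul_eq_zero (hV : Measurable V)
    (hVab : ∀ᵐ ω ∂P, V ω ∈ Set.Icc a b) (hD : Integrable D P)
    (hmom : ∀ n : ℕ, ∫ ω, V ω ^ n * D ω ∂P = 0) {f : ℝ → ℝ} (hf : Continuous f) :
    ∫ ω, f (V ω) * D ω ∂P = 0 := by
  have integral_le (ε : ℝ) (hε : 0 < ε) :
      ‖∫ ω, f (V ω) * D ω ∂P‖ ≤ ε * ∫ ω, ‖D ω‖ ∂P := by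
    obtain ⟨p, hp⟩ := exists_polynomial_near_of_continuousOn a b f hf.continuousOn ε hε
    calc ‖∫ ω, f (V ω) * D ω ∂P‖
        = ‖∫ ω, (p.eval (V ω) * D ω - f (V ω) * D ω) ∂P‖ := by
          rw [integral_sub (integrable_continuous_comp_mul_of_mem_Icc hV hVab hD p.continuous)
            (integrable_continuous_comp_mul_of_mem_Icc hV hVab hD hf),
            integral_polynomial_comp_mul_eq_zero hV hVab hD hmom, zero_sub, norm_neg]
      _ ≤ ∫ ω, ε * ‖D ω‖ ∂P := by
          refine norm_integral_le_of_norm_le (hD.norm.const_mul ε) (hVab.mono fun ω hω => ?_)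
          rw [← sub_mul, norm_mul]
          gcongr
          exact (hp _ hω).le
      _ = ε * ∫ ω, ‖D ω‖ ∂P := integral_const_mul _ _
  have tendsto_zero : Filter.Tendsto (fun ε : ℝ => ε * ∫ ω, ‖D ω‖ ∂P)
      (nhdsWithin 0 (Set.Ioi 0)) (nhds 0) := by
    refine Filter.Tendsto.mono_left ?_ nhdsWithin_le_nhds
    exact (by fun_prop : Continuous fun ε : ℝ => ε * ∫ ω, ‖D ω‖ ∂P).tendsto' 0 0 (zero_mul _)
  exact norm_le_zero_iff.1 (ge_of_tendsto tendsto_zero (eventually_mem_nhdsWithin.mono integral_le))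

lemma integral_comp_mul_condExp_comap [IsFiniteMeasure P] {S : Type*} [MeasurableSpace S]
    {Z : Ω → S} (hZ : Measurable Z) (hD : Integrable D P) {g : S → ℝ} (hg : Measurable g)
    (hgD : Integrable (fun ω => g (Z ω) * D ω) P) :
    ∫ ω, g (Z ω) * P[D | MeasurableSpace.comap Z inferInstance] ω ∂P
      = ∫ ω, g (Z ω) * D ω ∂P := by
  rw [← integral_condExp hZ.comap_le (f := fun ω => g (Z ω) * D ω)]
  exact integral_congr_ae (condExp_mul_of_stronglyMeasurable_left
    (hg.comp (comap_measurable Z)).stronglyMeasurable hgD hD).symm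

lemma condExp_comap_ae_eq_zero_of_forall_integral_pow_mul_eq_zero [IsFiniteMeasure P]
    (hV : Measurable V) (hVab : ∀ᵐ ω ∂P, V ω ∈ Set.Icc a b) (hD : Integrable D P)
    (hmom : ∀ n : ℕ, ∫ ω, V ω ^ n * D ω ∂P = 0) :
    P[D | MeasurableSpace.comap V inferInstance] =ᵐ[P] 0 := by
  obtain ⟨φ, hφ, hφV⟩ := (stronglyMeasurable_condExp (μ := P) (f := D)
    (m := MeasurableSpace.comap V inferInstance)).measurable.exists_eq_measurable_comp
  have hφ_int : Integrable φ (P.map V) := by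
    rw [integrable_map_measure hφ.aestronglyMeasurable hV.aemeasurable, ← hφV]
    exact integrable_condExp
  have hφ_zero : ∀ᵐ x ∂P.map V, φ x = 0 := by
    refine ae_eq_zero_of_integral_contDiff_smul_eq_zero hφ_int.locallyIntegrable
      fun f hf _ => ?_
    have hf : Continuous f := hf.continuous
    calc ∫ x, f x • φ x ∂P.map V
        = ∫ ω, f (V ω) * φ (V ω) ∂P :=
          integral_map hV.aemeasurable (hf.measurable.mul hφ).aestronglyMeasurable
      _ = ∫ ω, f (V ω) * P[D | MeasurableSpace.comap V inferInstance] ω ∂P := by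
          rw [hφV]; rfl
      _ = ∫ ω, f (V ω) * D ω ∂P := integral_comp_mul_condExp_comap hV hD hf.measurable
          (integrable_continuous_comp_mul_of_mem_Icc hV hVab hD hf)
      _ = 0 := integral_continuous_comp_mul_eq_zero hV hVab hD hmom hf
  rw [hφV]
  exact ae_of_ae_map hV.aemeasurable hφ_zero

end Moments

section TimeIntegral

lemma absolutelyContinuousOnInterval_pow_succ {F : ℝ → ℝ} {a b : ℝ}
    (hF : AbsolutelyContinuousOnInterval F a b) (n : ℕ) :
    AbsolutelyContinuousOnInterval (fun s => F s ^ (n + 1)) a b := by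
  induction n with
  | zero => simpa only [zero_add, pow_one] using hF
  | succ n ih => simpa only [pow_succ] using ih.fun_mul hF

lemma intervalIntegral_pow_succ {f : ℝ → ℝ} {a b : ℝ} (hf : IntervalIntegrable f volume a b)
    (n : ℕ) :
    (∫ s in a..b, f s) ^ (n + 1) = (n + 1) * ∫ s in a..b, (∫ u in a..s, f u) ^ n * f s := by
  set F : ℝ → ℝ := fun s => ∫ u in a..s, f u with hF
  have hF_ac : AbsolutelyContinuousOnInterval F a b :=
    hf.absolutelyContinuousOnInterval_intervalIntegral Set.left_mem_uIcc
  have hF_deriv : ∀ᵐ s, s ∈ Set.uIoc a b →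
      deriv (fun s => F s ^ (n + 1)) s = (n + 1) * (F s ^ n * f s) := by
    filter_upwards [hf.ae_hasDerivAt_integral] with s hs hs_mem
    have hF_s : HasDerivAt F (f s) s := hs (Set.uIoc_subset_uIcc hs_mem) a Set.left_mem_uIcc
    rw [(hF_s.fun_pow (n + 1)).deriv]
    push_cast
    simp only [mul_assoc]
  calc F b ^ (n + 1) = F b ^ (n + 1) - F a ^ (n + 1) := by simp [hF]
    _ = ∫ s in a..b, deriv (fun s => F s ^ (n + 1)) s :=
      (absolutelyContinuousOnInterval_pow_succ hF_ac n).integral_deriv_eq_sub.symm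
    _ = ∫ s in a..b, (n + 1) * (F s ^ n * f s) := intervalIntegral.integral_congr_ae hF_deriv
    _ = (n + 1) * ∫ s in a..b, F s ^ n * f s := intervalIntegral.integral_const_mul _ _

variable {Ω : Type*}

/-- The additive functional `∫₀ᵗ X s ds` of a real process `X`, computed path by path. It is the
occupation time of `C` when `X s` is the indicator of `Y s ∈ C`. -/
noncomputable def timeIntegral (X : ℝ → Ω → ℝ) (t : ℝ) (ω : Ω) : ℝ :=
  ∫ s in (0 : ℝ)..t, X s ω

variable {X : ℝ → Ω → ℝ} {M : ℝ}

lemma timeIntegral_eq_mul_integral_comp_mul (X : ℝ → Ω → ℝ) (t : ℝ) (ω : Ω) :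
    timeIntegral X t ω = t * ∫ u in Set.Ioc (0 : ℝ) 1, X (t * u) ω := by
  rw [timeIntegral, ← intervalIntegral.integral_of_le zero_le_one,
    intervalIntegral.mul_integral_comp_mul_left (f := fun s => X s ω), mul_zero, mul_one]

lemma abs_timeIntegral_le (hXM : ∀ s ω, |X s ω| ≤ M) (t : ℝ) (ω : Ω) :
    |timeIntegral X t ω| ≤ M * |t| := by
  simpa only [timeIntegral, sub_zero, Real.norm_eq_abs] using
    intervalIntegral.norm_integral_le_of_norm_le_const (f := fun s => X s ω) (a := 0) (b := t)
      fun s _ => hXM s ω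

lemma timeIntegral_mem_Icc (hXM : ∀ s ω, |X s ω| ≤ M) (t : ℝ) (ω : Ω) :
    timeIntegral X t ω ∈ Set.Icc (-(M * |t|)) (M * |t|) :=
  abs_le.1 (abs_timeIntegral_le hXM t ω)

variable [MeasurableSpace Ω]

lemma measurable_uncurry_timeIntegral (hX : Measurable (Function.uncurry X)) :
    Measurable (Function.uncurry (timeIntegral X)) := by
  simp only [Function.uncurry_def, timeIntegral_eq_mul_integral_comp_mul]
  refine measurable_fst.mul (StronglyMeasurable.integral_prod_right'
    (f := fun q : (ℝ × Ω) × ℝ => X (q.1.1 * q.2) q.1.2) ?_).measurable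
  exact (hX.comp ((measurable_fst.fst.mul measurable_snd).prodMk
    measurable_fst.snd)).stronglyMeasurable

lemma measurable_timeIntegral (hX : Measurable (Function.uncurry X)) (t : ℝ) :
    Measurable (timeIntegral X t) :=
  (measurable_uncurry_timeIntegral hX).of_uncurry_left

lemma intervalIntegrable_of_abs_le (hX : Measurable (Function.uncurry X))
    (hXM : ∀ s ω, |X s ω| ≤ M) (ω : Ω) (a b : ℝ) :
    IntervalIntegrable (fun s => X s ω) volume a b :=
  (intervalIntegrable_const (c := M)).mono_fun' hX.of_uncurry_right.aestronglyMeasurable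
    (ae_of_all _ fun s => hXM s ω)

variable {P : Measure Ω} [IsFiniteMeasure P]

lemma integrable_of_abs_le (hX : Measurable (Function.uncurry X))
    (hXM : ∀ s ω, |X s ω| ≤ M) (t : ℝ) : Integrable (X t) P :=
  Integrable.of_bound hX.of_uncurry_left.aestronglyMeasurable M (ae_of_all _ (hXM t))

lemma integrable_timeIntegral (hX : Measurable (Function.uncurry X))
    (hXM : ∀ s ω, |X s ω| ≤ M) (t : ℝ) : Integrable (timeIntegral X t) P :=
  Integrable.of_bound (measurable_timeIntegral hX t).aestronglyMeasurable (M * |t|)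
    (ae_of_all _ (abs_timeIntegral_le hXM t))

lemma integrable_comp_timeIntegral_mul (hX : Measurable (Function.uncurry X))
    (hXM : ∀ s ω, |X s ω| ≤ M) {g : ℝ → ℝ} (hg : Measurable g) {A : ℝ} (hgA : ∀ x, |g x| ≤ A)
    (t : ℝ) : Integrable (fun ω => g (timeIntegral X t ω) * X t ω) P :=
  (integrable_of_abs_le hX hXM t).bdd_mul
    (hg.comp (measurable_timeIntegral hX t)).aestronglyMeasurable (ae_of_all _ fun _ => hgA _)

lemma integral_timeIntegral_pow_succ (hX : Measurable (Function.uncurry X))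
    (hXM : ∀ s ω, |X s ω| ≤ M) (t : ℝ) (n : ℕ) :
    ∫ ω, timeIntegral X t ω ^ (n + 1) ∂P
      = (n + 1) * ∫ s in (0 : ℝ)..t, ∫ ω, timeIntegral X s ω ^ n * X s ω ∂P := by
  have integrable_prod : Integrable (Function.uncurry fun s ω => timeIntegral X s ω ^ n * X s ω)
      ((volume.restrict (Set.uIoc 0 t)).prod P) := by
    have : IsFiniteMeasure (volume.restrict (Set.uIoc 0 t)) := by
      rw [Set.uIoc]; infer_instance
    have fst_mem : ∀ᵐ q ∂(volume.restrict (Set.uIoc 0 t)).prod P, q.1 ∈ Set.uIoc 0 t :=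
      Measure.quasiMeasurePreserving_fst.ae (ae_restrict_mem measurableSet_uIoc)
    refine Integrable.of_bound
      (((measurable_uncurry_timeIntegral hX).pow_const n).mul hX).aestronglyMeasurable
      ((M * |t|) ^ n * M) ?_
    filter_upwards [fst_mem] with ⟨s, ω⟩ hs
    have hM : 0 ≤ M := (abs_nonneg _).trans (hXM s ω)
    have hst : |s| ≤ |t| := by
      simpa only [sub_zero] using Set.abs_sub_left_of_mem_uIcc (Set.uIoc_subset_uIcc hs)
    simp only [Function.uncurry_apply_pair, norm_mul, norm_pow, Real.norm_eq_abs]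
    gcongr
    · exact (abs_timeIntegral_le hXM s ω).trans (by gcongr)
    · exact hXM s ω
  have pow_succ_eq (ω : Ω) : timeIntegral X t ω ^ (n + 1)
      = (n + 1) * ∫ s in (0 : ℝ)..t, timeIntegral X s ω ^ n * X s ω :=
    intervalIntegral_pow_succ (intervalIntegrable_of_abs_le hX hXM ω 0 t) n
  simp only [pow_succ_eq]
  rw [integral_const_mul, ← intervalIntegral_integral_swap integrable_prod]

lemma integral_timeIntegral_pow_mul (hX : Measurable (Function.uncurry X))
    (hXM : ∀ s ω, |X s ω| ≤ M) (s : ℝ) (n : ℕ) :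
    ∫ ω, timeIntegral X s ω ^ n * X s ω ∂P
      = s ^ n * ∫ u, ∫ ω, ∏ i, X (s * (Fin.cons 1 u : Fin (n + 1) → ℝ) i) ω ∂P
          ∂Measure.pi fun _ : Fin n => volume.restrict (Set.Ioc (0 : ℝ) 1) := by
  have integrable_prod : Integrable
      (Function.uncurry fun u ω => ∏ i, X (s * (Fin.cons 1 u : Fin (n + 1) → ℝ) i) ω)
      ((Measure.pi fun _ : Fin n => volume.restrict (Set.Ioc (0 : ℝ) 1)).prod P) := by
    refine Integrable.of_bound (Measurable.aestronglyMeasurable ?_) (M ^ (n + 1))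
      (ae_of_all _ fun ⟨u, ω⟩ => ?_)
    · refine Finset.measurable_fun_prod _ fun i _ => hX.comp (Measurable.prodMk ?_ measurable_snd)
      refine Measurable.const_mul ?_ s
      cases i using Fin.cases with
      | zero => exact measurable_const
      | succ j => exact (measurable_pi_apply j).comp measurable_fst
    · rw [Function.uncurry_apply_pair, norm_prod]
      calc ∏ i, ‖X (s * (Fin.cons 1 u : Fin (n + 1) → ℝ) i) ω‖ ≤ ∏ _i : Fin (n + 1), M :=
            Finset.prod_le_prod (fun _ _ => norm_nonneg _) fun _ _ => hXM _ ω
        _ = M ^ (n + 1) := Fin.prod_const _ _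
  rw [integral_integral_swap integrable_prod, ← integral_const_mul]
  congr 1 with ω
  have pow_eq := integral_fintype_prod_eq_pow (ι := Fin n) (fun u => X (s * u) ω)
    (μ := volume.restrict (Set.Ioc (0 : ℝ) 1))
  rw [Fintype.card_fin] at pow_eq
  simp only [Fin.prod_univ_succ, Fin.cons_zero, Fin.cons_succ, mul_one]
  rw [integral_const_mul, pow_eq, timeIntegral_eq_mul_integral_comp_mul, mul_pow, mul_assoc,
    mul_comm (X s ω)]

end TimeIntegral

section SelfSimilar

variable {Ω E F : Type*} [MeasurableSpace Ω] [MeasurableSpace E] [SMul ℝ E]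
  [MeasurableSpace F] [SMul ℝ F]

/-- A process `Y` with time set `[0, ∞)` is `β`-self-similar if `(Y (c * t))` and `(c ^ β • Y t)`
have the same finite-dimensional distributions for every `c > 0`. Processes are indexed by all of
`ℝ`, but only their values at nonnegative times are constrained. -/
def IsSelfSimilar (P : Measure Ω) (β : ℝ) (Y : ℝ → Ω → E) : Prop :=
  ∀ c : ℝ, 0 < c → ∀ (n : ℕ) (t : Fin n → ℝ), (∀ i, 0 ≤ t i) →
    Measure.map (fun ω (i : Fin n) => Y (c * t i) ω) P
      = Measure.map (fun ω (i : Fin n) => (c ^ β) • Y (t i) ω) P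

namespace IsSelfSimilar

variable {P : Measure Ω}

lemma comp_homogeneous [MeasurableConstSMul ℝ E] {Y : ℝ → Ω → E} {α β : ℝ}
    (hY : ∀ t, Measurable (Y t)) (hss : IsSelfSimilar P β Y) {h : E → F} (hh : Measurable h)
    (hom : ∀ l : ℝ, 0 < l → ∀ x, h (l • x) = l ^ α • h x) :
    IsSelfSimilar P (β * α) fun t ω => h (Y t ω) := by
  intro c hc n t ht
  have hh_pi : Measurable fun (y : Fin n → E) i => h (y i) :=
    measurable_pi_lambda _ fun i => hh.comp (measurable_pi_apply i)
  have hY_smul : Measurable fun ω (i : Fin n) => c ^ β • Y (t i) ω :=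
    measurable_pi_lambda _ fun i => (hY (t i)).const_smul (c ^ β)
  have map_eq := congrArg (Measure.map fun y i => h (y i)) (hss c hc n t ht)
  rw [Measure.map_map hh_pi (measurable_pi_lambda _ fun i => hY _),
    Measure.map_map hh_pi hY_smul] at map_eq
  simpa only [Function.comp_def, hom _ (Real.rpow_pos_of_pos hc β), ← Real.rpow_mul hc.le]
    using map_eq

variable {X : ℝ → Ω → ℝ} {M : ℝ}

lemma integral_prod_comp_mul (hX : ∀ t, Measurable (X t)) (hss : IsSelfSimilar P 0 X)
    {c : ℝ} (hc : 0 < c) {n : ℕ} {t : Fin n → ℝ} (ht : ∀ i, 0 ≤ t i) :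
    ∫ ω, ∏ i, X (c * t i) ω ∂P = ∫ ω, ∏ i, X (t i) ω ∂P := by
  have map_eq := hss c hc n t ht
  simp only [Real.rpow_zero, one_smul] at map_eq
  have integral_prod_eq (s : Fin n → ℝ) :
      ∫ x : Fin n → ℝ, ∏ i, x i ∂Measure.map (fun ω i => X (s i) ω) P
        = ∫ ω, ∏ i, X (s i) ω ∂P :=
    integral_map (measurable_pi_lambda _ fun i => hX (s i)).aemeasurable
      (by fun_prop : Continuous fun x : Fin n → ℝ => ∏ i, x i).aestronglyMeasurable
  rw [← integral_prod_eq, map_eq, integral_prod_eq]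

variable [IsFiniteMeasure P]

lemma integral_timeIntegral_pow_mul_eq (hX : Measurable (Function.uncurry X))
    (hXM : ∀ s ω, |X s ω| ≤ M) (hss : IsSelfSimilar P 0 X) {s : ℝ} (hs : 0 < s) (n : ℕ) :
    ∫ ω, timeIntegral X s ω ^ n * X s ω ∂P
      = s ^ n * ∫ ω, timeIntegral X 1 ω ^ n * X 1 ω ∂P := by
  rw [integral_timeIntegral_pow_mul hX hXM s, integral_timeIntegral_pow_mul hX hXM 1, one_pow,
    one_mul]
  congr 1
  have mem_Ioc : ∀ᵐ u ∂Measure.pi fun _ : Fin n => volume.restrict (Set.Ioc (0 : ℝ) 1),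
      ∀ i, u i ∈ Set.Ioc (0 : ℝ) 1 :=
    ae_all_iff.2 fun i =>
      (Measure.quasiMeasurePreserving_eval _ i).ae (ae_restrict_mem measurableSet_Ioc)
  refine integral_congr_ae (mem_Ioc.mono fun u hu => ?_)
  simp only [one_mul]
  refine integral_prod_comp_mul (fun t => hX.of_uncurry_left) hss hs fun i => ?_
  cases i using Fin.cases with
  | zero => exact zero_le_one
  | succ j => exact (hu j).1.le

lemma integral_timeIntegral_pow_succ_eq (hX : Measurable (Function.uncurry X))
    (hXM : ∀ s ω, |X s ω| ≤ M) (hss : IsSelfSimilar P 0 X) {t : ℝ} (ht : 0 < t) (n : ℕ) :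
    ∫ ω, timeIntegral X t ω ^ (n + 1) ∂P
      = t * ∫ ω, timeIntegral X t ω ^ n * X t ω ∂P := by
  set m := ∫ ω, timeIntegral X 1 ω ^ n * X 1 ω ∂P
  calc ∫ ω, timeIntegral X t ω ^ (n + 1) ∂P
      = (n + 1) * ∫ s in (0 : ℝ)..t, ∫ ω, timeIntegral X s ω ^ n * X s ω ∂P :=
        integral_timeIntegral_pow_succ hX hXM t n
    _ = (n + 1) * ∫ s in (0 : ℝ)..t, s ^ n * m := by
        congr 1
        refine intervalIntegral.integral_congr_ae (ae_of_all _ fun s hs => ?_)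
        rw [Set.uIoc_of_le ht.le] at hs
        exact integral_timeIntegral_pow_mul_eq hX hXM hss hs.1 n
    _ = t * (t ^ n * m) := by
        rw [intervalIntegral.integral_mul_const, integral_pow, zero_pow n.succ_ne_zero]
        field_simp
        ring
    _ = t * ∫ ω, timeIntegral X t ω ^ n * X t ω ∂P := by
        rw [integral_timeIntegral_pow_mul_eq hX hXM hss ht]

theorem condExp_comap_timeIntegral (hX : Measurable (Function.uncurry X))
    (hXM : ∀ s ω, |X s ω| ≤ M) (hss : IsSelfSimilar P 0 X) {t : ℝ} (ht : 0 < t) :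
    P[X t | MeasurableSpace.comap (timeIntegral X t) inferInstance]
      =ᵐ[P] fun ω => t⁻¹ * timeIntegral X t ω := by
  set V := timeIntegral X t
  have hV : Measurable V := measurable_timeIntegral hX t
  have hVab : ∀ᵐ ω ∂P, V ω ∈ Set.Icc (-(M * |t|)) (M * |t|) :=
    ae_of_all _ (timeIntegral_mem_Icc hXM t)
  have hX_int : Integrable (X t) P := integrable_of_abs_le hX hXM t
  have hV_int : Integrable (fun ω => t⁻¹ * V ω) P := (integrable_timeIntegral hX hXM t).const_mul _
  have hmom (n : ℕ) : ∫ ω, V ω ^ n * (X t ω - t⁻¹ * V ω) ∂P = 0 := by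
    have pow_mul_eq (ω : Ω) : V ω ^ n * (t⁻¹ * V ω) = t⁻¹ * V ω ^ (n + 1) := by ring
    simp only [mul_sub]
    rw [integral_sub
      (integrable_continuous_comp_mul_of_mem_Icc hV hVab hX_int (continuous_pow n))
      (integrable_continuous_comp_mul_of_mem_Icc hV hVab hV_int (continuous_pow n))]
    simp only [pow_mul_eq]
    rw [integral_const_mul, integral_timeIntegral_pow_succ_eq hX hXM hss ht,
      inv_mul_cancel_left₀ ht.ne', sub_self]
  have condExp_V : P[fun ω => t⁻¹ * V ω | MeasurableSpace.comap V inferInstance]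
      = fun ω => t⁻¹ * V ω :=
    condExp_of_stronglyMeasurable hV.comap_le
      ((comap_measurable V).const_mul t⁻¹).stronglyMeasurable hV_int
  filter_upwards [condExp_sub hX_int hV_int (MeasurableSpace.comap V inferInstance),
    condExp_comap_ae_eq_zero_of_forall_integral_pow_mul_eq_zero hV hVab (hX_int.sub hV_int) hmom]
    with ω h_sub h_zero
  rw [h_zero, condExp_V] at h_sub
  exact sub_eq_zero.1 h_sub.symm

theorem integral_comp_timeIntegral_mul (hX : Measurable (Function.uncurry X))
    (hXM : ∀ s ω, |X s ω| ≤ M) (hss : IsSelfSimilar P 0 X) {t : ℝ} (ht : 0 < t)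
    {g : ℝ → ℝ} (hg : Measurable g)
    (hgX : Integrable (fun ω => g (timeIntegral X t ω) * X t ω) P) :
    ∫ ω, g (timeIntegral X t ω) * X t ω ∂P
      = t⁻¹ * ∫ ω, timeIntegral X t ω * g (timeIntegral X t ω) ∂P := by
  rw [← integral_comp_mul_condExp_comap (measurable_timeIntegral hX t)
    (integrable_of_abs_le hX hXM t) hg hgX, ← integral_const_mul]
  refine integral_congr_ae ((condExp_comap_timeIntegral hX hXM hss ht).mono fun ω hω => ?_)
  simp only [hω]
  ring

end IsSelfSimilar

theorem statement3_general [MeasurableConstSMul ℝ E] (P : Measure Ω) [IsFiniteMeasure P]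
    (Y : ℝ → Ω → E) (hY : Measurable fun p : ℝ × Ω => Y p.1 p.2) (β : ℝ)
    (hss : IsSelfSimilar P β Y) (h : E → ℝ) (hh : Measurable h) {M : ℝ} (hM : ∀ x, |h x| ≤ M)
    (hom : ∀ l : ℝ, 0 < l → ∀ x, h (l • x) = h x)
    (V : ℝ → Ω → ℝ) (hV : ∀ t ω, V t ω = ∫ s in (0 : ℝ)..t, h (Y s ω))
    (t : ℝ) (ht : 0 < t) (g : ℝ → ℝ) (hg : Measurable g)
    (hint : Integrable (fun ω => g (V t ω) * h (Y t ω)) P) :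
    ∫ ω, g (V t ω) * h (Y t ω) ∂P = t⁻¹ * ∫ ω, V t ω * g (V t ω) ∂P := by
  obtain rfl : V = timeIntegral fun s ω => h (Y s ω) := funext₂ hV
  have hss_h : IsSelfSimilar P (β * 0) fun s ω => h (Y s ω) :=
    hss.comp_homogeneous (fun s => hY.of_uncurry_left (f := Y)) hh (by simpa using hom)
  rw [mul_zero] at hss_h
  exact hss_h.integral_comp_timeIntegral_mul (X := fun s ω => h (Y s ω)) (hh.comp hY)
    (fun s ω => hM (Y s ω)) ht hg hint

end SelfSimilar

lemma abs_indicator_one_le_one {E : Type*} (C : Set E) (x : E) :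
    |C.indicator (fun _ => (1 : ℝ)) x| ≤ 1 := by
  by_cases hx : x ∈ C <;> simp [hx]

lemma indicator_one_smul_of_cone {E : Type*} [SMul ℝ E] {C : Set E}
    (hcone : ∀ l : ℝ, 0 < l → ∀ x, x ∈ C ↔ l • x ∈ C) (l : ℝ) (hl : 0 < l) (x : E) :
    C.indicator (fun _ => (1 : ℝ)) (l • x) = C.indicator (fun _ => 1) x := by
  classical simp only [Set.indicator_apply, ← hcone l hl x]

/-- Let `Y` be a jointly measurable `β`-self-similar process with values
in `ℝ^d`, `C` a Borel cone, and `V_t := ∫₀ᵗ 1_{Y_s ∈ C} ds`.  Then for every `t > 0` and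
every bounded measurable `g : ℝ → ℝ`,
`E[g(V_t)·1_{Y_t ∈ C}] = t⁻¹ · E[V_t · g(V_t)]`. -/
theorem statement3
    {Ω : Type*} [MeasurableSpace Ω] (P : Measure Ω) [IsProbabilityMeasure P]
    {d : ℕ} (Y : ℝ → Ω → (Fin d → ℝ))
    (hY : Measurable fun p : ℝ × Ω => Y p.1 p.2)
    (β : ℝ)
    (hss : ∀ c : ℝ, 0 < c → ∀ (n : ℕ) (t : Fin n → ℝ), (∀ i, 0 ≤ t i) →
      Measure.map (fun ω (i : Fin n) => Y (c * t i) ω) P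
        = Measure.map (fun ω (i : Fin n) => (c ^ β) • Y (t i) ω) P)
    (C : Set (Fin d → ℝ)) (hC : MeasurableSet C)
    (hcone : ∀ (l : ℝ), 0 < l → ∀ x : Fin d → ℝ, x ∈ C ↔ l • x ∈ C)
    (V : ℝ → Ω → ℝ)
    (hV : ∀ t ω, V t ω = ∫ s in (0:ℝ)..t, Set.indicator C (fun _ => (1:ℝ)) (Y s ω)) :
    ∀ t : ℝ, 0 < t → ∀ g : ℝ → ℝ, Measurable g → (∃ M : ℝ, ∀ x, |g x| ≤ M) →
      (∫ ω, g (V t ω) * Set.indicator C (fun _ => (1:ℝ)) (Y t ω) ∂P)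
        = t⁻¹ * ∫ ω, V t ω * g (V t ω) ∂P := by
  rintro t ht g hg ⟨A, hA⟩
  obtain rfl : V = timeIntegral fun s ω => C.indicator (fun _ => 1) (Y s ω) := funext₂ hV
  have hI : Measurable (C.indicator fun _ => (1 : ℝ)) := measurable_const.indicator hC
  exact statement3_general P Y hY β hss _ hI (abs_indicator_one_le_one C)
    (indicator_one_smul_of_cone hcone) _ hV t ht g hg (integrable_comp_timeIntegral_mul
      (X := fun s ω => C.indicator (fun _ => 1) (Y s ω)) (hI.comp hY)
      (fun s ω => abs_indicator_one_le_one C (Y s ω)) hg hA t)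
end

section
/- Let (Y_t : t ∈ ℝ) be a jointly measurable stationary real-valued process with E|Y_0| < ∞, and fix λ > 0. Define Ȳ_λ := ∫₀^∞ λ e^{−λt} Y_t dt. Then E(Y_0 | σ(Ȳ_λ)) = Ȳ_λ almost surely. -/
open MeasureTheory ProbabilityTheory

/-!
Let `Z s` be the exponentially discounted average of the future of `Y` from time `s`, so that
`Ȳ_λ = Z 0`. Integrating by parts, `Z` is absolutely continuous with velocity `V = λ (Z - Y)`, and
`(Z s, V s)` is a function of the path of `Y` seen from time `s`, so its law does not depend on `s`.
For `φ` bounded and continuous with primitive `Φ`, the chain rule then gives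
`0 = E[Φ (Z 1) - Φ (Z 0)] = ∫₀¹ E[φ (Z u) V u] du = E[φ (Z 0) V 0]`, that is `E[V 0 | Z 0] = 0`.

The law of an integral over time is not visibly determined by the finite-dimensional
distributions. It is, because by the strong law of large numbers the integral is a limit of
averages of the process along almost every i.i.d. sequence of sampling times.
-/

section AbsoluteContinuity

open Set

lemma absolutelyContinuousOnInterval_comp_lipschitz {X Y : Type*} [PseudoMetricSpace X]
    [PseudoMetricSpace Y] {Φ : X → Y} {K : NNReal} (hΦ : LipschitzWith K Φ) {f : ℝ → X} {a b : ℝ}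
    (hf : AbsolutelyContinuousOnInterval f a b) :
    AbsolutelyContinuousOnInterval (Φ ∘ f) a b := by
  unfold AbsolutelyContinuousOnInterval at *
  refine squeeze_zero (fun _ ↦ Finset.sum_nonneg fun _ _ ↦ dist_nonneg) (fun _ ↦ ?_)
    (by simpa only [mul_zero] using hf.const_mul (K : ℝ))
  rw [Finset.mul_sum]
  exact Finset.sum_le_sum fun _ _ ↦ hΦ.dist_le_mul _ _

lemma integral_comp_mul_eq_sub_of_eq_add_integral {Φ φ f v : ℝ → ℝ} {K : NNReal} {a b : ℝ}
    (hΦ : ∀ x, HasDerivAt Φ (φ x) x) (hΦL : LipschitzWith K Φ)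
    (hv : IntervalIntegrable v volume a b)
    (hf : ∀ x ∈ uIcc a b, f x = f a + ∫ t in a..x, v t) :
    ∫ x in a..b, φ (f x) * v x = Φ (f b) - Φ (f a) := by
  set F : ℝ → ℝ := fun x ↦ f a + ∫ t in a..x, v t
  have hF : AbsolutelyContinuousOnInterval F a b :=
    (contDiffOn_const.absolutelyContinuousOnInterval).add
      (hv.absolutelyContinuousOnInterval_intervalIntegral left_mem_uIcc)
  have h_ends : Φ (f b) - Φ (f a) = (Φ ∘ F) b - (Φ ∘ F) a := by
    simp only [Function.comp_apply, ← hf b right_mem_uIcc, ← hf a left_mem_uIcc, F]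
  rw [h_ends, ← (absolutelyContinuousOnInterval_comp_lipschitz hΦL hF).integral_deriv_eq_sub]
  refine intervalIntegral.integral_congr_ae ?_
  filter_upwards [hv.ae_hasDerivAt_integral] with x hx hxab
  have hxab := uIoc_subset_uIcc hxab
  rw [hf x hxab]
  exact ((hΦ (F x)).comp x ((hx hxab a left_mem_uIcc).const_add (f a))).deriv.symm

end AbsoluteContinuity

section ConditionalExpectation

open scoped BoundedContinuousFunction

variable {Ω : Type*} [MeasurableSpace Ω] {P : Measure Ω} [IsFiniteMeasure P]

lemma condExp_comap_ae_eq_zero_of_forall_integral_smul_eq_zero {E F : Type*}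
    [NormedAddCommGroup E] [NormedSpace ℝ E] [FiniteDimensional ℝ E] [MeasurableSpace E]
    [BorelSpace E] [NormedAddCommGroup F] [NormedSpace ℝ F] [CompleteSpace F]
    {Z : Ω → E} {V : Ω → F} (hZ : Measurable Z) (hV : Integrable V P)
    (h : ∀ φ : E →ᵇ ℝ, ∫ ω, φ (Z ω) • V ω ∂P = 0) :
    P[V | MeasurableSpace.comap Z inferInstance] =ᵐ[P] 0 := by
  obtain ⟨k, hk, hkZ⟩ := (stronglyMeasurable_condExp (μ := P) (f := V)
    (m := MeasurableSpace.comap Z inferInstance)).exists_eq_measurable_comp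
  have hk_int : Integrable k (P.map Z) :=
    (integrable_map_measure hk.aestronglyMeasurable hZ.aemeasurable).2
      (hkZ ▸ integrable_condExp)
  have hk_zero : ∀ᵐ x ∂P.map Z, k x = 0 := by
    refine ae_eq_zero_of_integral_contDiff_smul_eq_zero hk_int.locallyIntegrable fun g hg hg' ↦ ?_
    obtain ⟨C, hC⟩ := hg'.exists_bound_of_continuous hg.continuous
    have hgZ : StronglyMeasurable[MeasurableSpace.comap Z inferInstance] (g ∘ Z) :=
      hg.continuous.stronglyMeasurable.comp_measurable (comap_measurable Z)
    have hgV : Integrable ((g ∘ Z) • V) P :=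
      hV.bdd_smul C (hgZ.mono hZ.comap_le).aestronglyMeasurable (ae_of_all _ fun ω ↦ hC (Z ω))
    calc ∫ x, g x • k x ∂P.map Z
        = ∫ ω, g (Z ω) • k (Z ω) ∂P := integral_map hZ.aemeasurable
          (hg.continuous.stronglyMeasurable.smul hk).aestronglyMeasurable
      _ = ∫ ω, (P[(g ∘ Z) • V | MeasurableSpace.comap Z inferInstance]) ω ∂P := by
          refine integral_congr_ae ?_
          have h_pull := condExp_smul_of_aestronglyMeasurable_left hgZ.aestronglyMeasurable hgV hV
          rw [hkZ] at h_pull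
          exact h_pull.symm
      _ = ∫ ω, g (Z ω) • V ω ∂P := integral_condExp hZ.comap_le
      _ = 0 := h (.ofNormedAddCommGroup g hg.continuous C hC)
  rw [hkZ]
  exact ae_of_ae_map hZ.aemeasurable hk_zero

end ConditionalExpectation

section TimeIntegral

open Filter Topology

variable {Ω Ω' T E : Type*} [MeasurableSpace Ω] [MeasurableSpace Ω'] [MeasurableSpace T]
  [NormedAddCommGroup E] [MeasurableSpace E] [BorelSpace E]

lemma integrable_uncurry_of_identDistrib {P : Measure Ω} [SFinite P] {ν : Measure T}
    [IsFiniteMeasure ν] {X : T → Ω → E} {Y : Ω' → E} {Q : Measure Ω'}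
    (hX : AEStronglyMeasurable (Function.uncurry X) (ν.prod P))
    (hXY : ∀ t, IdentDistrib (X t) Y P Q) (hY : Integrable Y Q) :
    Integrable (Function.uncurry X) (ν.prod P) := by
  refine (integrable_prod_iff hX).2 ⟨ae_of_all _ fun t ↦ (hXY t).integrable_iff.2 hY, ?_⟩
  have h_norm (t : T) : ∫ ω, ‖X t ω‖ ∂P = ∫ ω, ‖Y ω‖ ∂Q := (hXY t).norm.integral_eq
  simp only [Function.uncurry_apply_pair, h_norm, integrable_const]

variable [NormedSpace ℝ E]

/-- The average of `x` over the first `n` of the sampling times `τ`; it is `0` for `n = 0`. -/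
noncomputable def sampleMean (τ : ℕ → T) (n : ℕ) (x : T → E) : E :=
  (n : ℝ)⁻¹ • ∑ i ∈ Finset.range n, x (τ i)

variable [CompleteSpace E]

lemma ae_tendsto_sampleMean {ν : Measure T} [IsProbabilityMeasure ν] {x : T → E}
    (hx : Measurable x) (hxi : Integrable x ν) :
    ∀ᵐ τ ∂Measure.infinitePi (fun _ : ℕ ↦ ν),
      Tendsto (fun n ↦ sampleMean τ n x) atTop (𝓝 (∫ t, x t ∂ν)) := by
  have h_eval (i : ℕ) := measurePreserving_eval_infinitePi (fun _ : ℕ ↦ ν) i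
  have h_ident (i : ℕ) : IdentDistrib (fun τ : ℕ → T ↦ x (τ i)) x
      (Measure.infinitePi fun _ ↦ ν) ν :=
    ((h_eval i).hasLaw.identDistrib HasLaw.id).comp hx
  have h_indep := iIndepFun_infinitePi (P := fun _ : ℕ ↦ ν) (X := fun _ ↦ x) fun _ ↦ hx
  rw [← (h_ident 0).integral_eq]
  exact strong_law_ae _ ((h_ident 0).integrable_iff.2 hxi) (fun _ _ hij ↦ h_indep.indepFun hij)
    fun i ↦ (h_ident i).trans (h_ident 0).symm

variable [SecondCountableTopology E]

lemma ae_ae_tendsto_sampleMean {P : Measure Ω} [SFinite P] {ν : Measure T} [IsProbabilityMeasure ν]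
    {X : T → Ω → E} (hX : Measurable (Function.uncurry X))
    (hXi : Integrable (Function.uncurry X) (ν.prod P)) :
    ∀ᵐ τ ∂Measure.infinitePi (fun _ : ℕ ↦ ν), ∀ᵐ ω ∂P,
      Tendsto (fun n ↦ sampleMean τ n (X · ω)) atTop (𝓝 (∫ t, X t ω ∂ν)) := by
  refine (Measure.ae_ae_comm (μ := P) (measurableSet_tendsto_fun (fun n ↦ ?_) ?_)).1 ?_
  · refine (Finset.measurable_sum _ fun i _ ↦ ?_).const_smul _
    exact hX.comp (f := fun p : Ω × (ℕ → T) ↦ (p.2 i, p.1)) (by fun_prop)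
  · exact hX.stronglyMeasurable.integral_prod_left'.measurable.comp measurable_fst
  · filter_upwards [hXi.prod_left_ae] with ω hω
    exact ae_tendsto_sampleMean hX.of_uncurry_right hω

lemma identDistrib_integral_prodMk {P : Measure Ω} [SFinite P] {P' : Measure Ω'} [SFinite P']
    {ν : Measure T} [IsProbabilityMeasure ν] {X : T → Ω → E} {X' : T → Ω' → E}
    (hX : Measurable (Function.uncurry X)) (hX' : Measurable (Function.uncurry X'))
    (hXi : Integrable (Function.uncurry X) (ν.prod P))
    (hXi' : Integrable (Function.uncurry X') (ν.prod P'))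
    (hXX' : IdentDistrib (fun ω t ↦ X t ω) (fun ω t ↦ X' t ω) P P') :
    IdentDistrib (fun ω ↦ (∫ t, X t ω ∂ν, fun t ↦ X t ω))
      (fun ω ↦ (∫ t, X' t ω ∂ν, fun t ↦ X' t ω)) P P' := by
  obtain ⟨τ, hτ, hτ'⟩ :=
    ((ae_ae_tendsto_sampleMean hX hXi).and (ae_ae_tendsto_sampleMean hX' hXi')).exists
  let limMean (x : T → E) : E := limUnder atTop fun n ↦ sampleMean τ n x
  have h_limMean : Measurable limMean := by
    refine (StronglyMeasurable.limUnder fun n ↦ Measurable.stronglyMeasurable ?_).measurable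
    exact (Finset.measurable_sum _ fun i _ ↦ measurable_pi_apply (τ i)).const_smul _
  have h_comp := hXX'.comp (h_limMean.prodMk measurable_id)
  refine (IdentDistrib.of_ae_eq h_comp.aemeasurable_fst ?_).symm.trans
    (h_comp.trans (IdentDistrib.of_ae_eq h_comp.aemeasurable_snd ?_))
  · filter_upwards [hτ] with ω hω using Prod.ext hω.limUnder_eq rfl
  · filter_upwards [hτ'] with ω hω using Prod.ext hω.limUnder_eq rfl

end TimeIntegral

section Stationary

variable {Ω T E : Type*} [MeasurableSpace Ω] [MeasurableSpace E] {P : Measure Ω}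

/-- A process is stationary if the law of its path, on the product σ-algebra of `T → E`, is
invariant under all time shifts. -/
def IsStationaryProcess [Add T] (Y : T → Ω → E) (P : Measure Ω) : Prop :=
  ∀ h, IdentDistrib (fun ω t ↦ Y (t + h) ω) (fun ω t ↦ Y t ω) P P

lemma isStationaryProcess_of_map_fin_eq [Add T] [IsFiniteMeasure P] {Y : T → Ω → E}
    (hY : ∀ t, Measurable (Y t))
    (h_map : ∀ (s : T) (n : ℕ) (t : Fin n → T),
      P.map (fun ω i ↦ Y (t i + s) ω) = P.map (fun ω i ↦ Y (t i) ω)) :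
    IsStationaryProcess Y P := by
  intro s
  refine (identDistrib_iff_forall_finset_identDistrib
    (measurable_pi_lambda _ fun t ↦ hY (t + s)).aemeasurable
    (measurable_pi_lambda _ hY).aemeasurable).2 fun I ↦ ?_
  have h_fin : IdentDistrib (fun ω i ↦ Y (I.equivFin.symm i + s) ω)
      (fun ω i ↦ Y (I.equivFin.symm i) ω) P P :=
    ⟨(measurable_pi_lambda _ fun _ ↦ hY _).aemeasurable,
      (measurable_pi_lambda _ fun _ ↦ hY _).aemeasurable, h_map s _ fun i ↦ I.equivFin.symm i⟩
  have h_reindex : Measurable fun (x : Fin I.card → E) (t : I) ↦ x (I.equivFin t) := by fun_prop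
  simpa only [Function.comp_def, Finset.restrict_def, Equiv.symm_apply_apply]
    using h_fin.comp h_reindex

lemma IsStationaryProcess.identDistrib_zero [AddZeroClass T] {Y : T → Ω → E}
    (hY : IsStationaryProcess Y P) (t : T) : IdentDistrib (Y t) (Y 0) P P := by
  simpa only [Function.comp_def, zero_add] using (hY t).comp (measurable_pi_apply (0 : T))

end Stationary

section Velocity

open Set
open scoped BoundedContinuousFunction

variable {Ω : Type*} [MeasurableSpace Ω] {P : Measure Ω} {Z V : ℝ → Ω → ℝ}

lemma integral_comp_mul_velocity_eq_zero [SFinite P]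
    (hZ : Measurable (Function.uncurry Z)) (hV : Measurable (Function.uncurry V))
    (hZV : ∀ s, IdentDistrib (fun ω ↦ (Z s ω, V s ω)) (fun ω ↦ (Z 0 ω, V 0 ω)) P P)
    (hZi : Integrable (Z 0) P) (hVi : Integrable (V 0) P)
    (h_vel : ∀ᵐ ω ∂P, ∀ s, 0 ≤ s → Z s ω = Z 0 ω + ∫ u in (0 : ℝ)..s, V u ω) (φ : ℝ →ᵇ ℝ) :
    ∫ ω, φ (Z 0 ω) * V 0 ω ∂P = 0 := by
  have hZs (s : ℝ) : IdentDistrib (Z s) (Z 0) P P := (hZV s).comp measurable_fst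
  have hVs (s : ℝ) : IdentDistrib (V s) (V 0) P P := (hZV s).comp measurable_snd
  let Φ (x : ℝ) : ℝ := ∫ t in (0 : ℝ)..x, φ t
  have hΦ (x : ℝ) : HasDerivAt Φ (φ x) x := (φ.continuous.integral_hasStrictDerivAt 0 x).hasDerivAt
  have hΦL : LipschitzWith ‖φ‖₊ Φ := lipschitzWith_of_nnnorm_deriv_le
    (fun x ↦ (hΦ x).differentiableAt) fun x ↦ (hΦ x).deriv ▸ φ.norm_coe_le_norm x
  have hΦZ (s : ℝ) : Integrable (fun ω ↦ Φ (Z s ω)) P :=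
    (((hZs s).integrable_iff.2 hZi).norm.const_mul ‖φ‖).mono'
      (hΦL.continuous.measurable.comp hZ.of_uncurry_left).aestronglyMeasurable
      (ae_of_all _ fun ω ↦ by simpa [Φ] using hΦL.dist_le_mul (Z s ω) 0)
  have hV_prod : Integrable (Function.uncurry V) ((volume.restrict (Ioc (0 : ℝ) 1)).prod P) :=
    integrable_uncurry_of_identDistrib hV.aestronglyMeasurable hVs hVi
  have hφV_prod : Integrable (Function.uncurry fun u ω ↦ φ (Z u ω) * V u ω)
      ((volume.restrict (Ioc (0 : ℝ) 1)).prod P) :=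
    hV_prod.bdd_mul (φ.continuous.measurable.comp hZ).aestronglyMeasurable
      (ae_of_all _ fun p ↦ φ.norm_coe_le_norm _)
  have h_chain : ∀ᵐ ω ∂P, ∫ u in Ioc (0 : ℝ) 1, φ (Z u ω) * V u ω = Φ (Z 1 ω) - Φ (Z 0 ω) := by
    filter_upwards [h_vel, hV_prod.prod_left_ae] with ω hω hVω
    rw [← intervalIntegral.integral_of_le zero_le_one]
    refine integral_comp_mul_eq_sub_of_eq_add_integral hΦ hΦL
      ((intervalIntegrable_iff_integrableOn_Ioc_of_le zero_le_one).2 hVω) fun s hs ↦ hω s ?_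
    exact (uIcc_of_le (zero_le_one' ℝ) ▸ hs).1
  have h_const (u : ℝ) : ∫ ω, φ (Z u ω) * V u ω ∂P = ∫ ω, φ (Z 0 ω) * V 0 ω ∂P :=
    ((hZV u).comp (u := fun p : ℝ × ℝ ↦ φ p.1 * p.2)
      ((φ.continuous.measurable.comp measurable_fst).mul measurable_snd)).integral_eq
  calc ∫ ω, φ (Z 0 ω) * V 0 ω ∂P
      = ∫ u in Ioc (0 : ℝ) 1, ∫ ω, φ (Z u ω) * V u ω ∂P := by simp [h_const]
    _ = ∫ ω, (∫ u in Ioc (0 : ℝ) 1, φ (Z u ω) * V u ω) ∂P := integral_integral_swap hφV_prod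
    _ = ∫ ω, (Φ (Z 1 ω) - Φ (Z 0 ω)) ∂P := integral_congr_ae h_chain
    _ = (∫ ω, Φ (Z 1 ω) ∂P) - ∫ ω, Φ (Z 0 ω) ∂P := integral_sub (hΦZ 1) (hΦZ 0)
    _ = 0 := sub_eq_zero.2 ((hZs 1).comp hΦL.continuous.measurable).integral_eq

theorem condExp_velocity_ae_eq_zero [IsFiniteMeasure P]
    (hZ : Measurable (Function.uncurry Z)) (hV : Measurable (Function.uncurry V))
    (hZV : ∀ s, IdentDistrib (fun ω ↦ (Z s ω, V s ω)) (fun ω ↦ (Z 0 ω, V 0 ω)) P P)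
    (hZi : Integrable (Z 0) P) (hVi : Integrable (V 0) P)
    (h_vel : ∀ᵐ ω ∂P, ∀ s, 0 ≤ s → Z s ω = Z 0 ω + ∫ u in (0 : ℝ)..s, V u ω) :
    P[V 0 | MeasurableSpace.comap (Z 0) inferInstance] =ᵐ[P] 0 :=
  condExp_comap_ae_eq_zero_of_forall_integral_smul_eq_zero hZ.of_uncurry_left hVi
    (integral_comp_mul_velocity_eq_zero hZ hV hZV hZi hVi h_vel)

end Velocity

section ExponentialAverage

open Set

lemma expMeasure_eq_withDensity_restrict_Ioi (r : ℝ) :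
    expMeasure r = (volume.restrict (Ioi 0)).withDensity
      fun t ↦ ENNReal.ofReal (r * Real.exp (-(r * t))) := by
  rw [restrict_Ioi_eq_restrict_Ici, ← withDensity_indicator measurableSet_Ici]
  change volume.withDensity (exponentialPDF r) = _
  congr with t
  simp only [exponentialPDF_eq, indicator_apply, mem_Ici]
  split_ifs <;> simp

variable {r : ℝ}

lemma integral_expMeasure {E : Type*} [NormedAddCommGroup E] [NormedSpace ℝ E] (hr : 0 ≤ r)
    (f : ℝ → E) :
    ∫ t, f t ∂expMeasure r = ∫ t in Ioi 0, (r * Real.exp (-(r * t))) • f t := by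
  have h_density (t : ℝ) : 0 ≤ r * Real.exp (-(r * t)) := by positivity
  rw [expMeasure_eq_withDensity_restrict_Ioi, integral_withDensity_eq_integral_toReal_smul
    (by fun_prop) (ae_of_all _ fun _ ↦ ENNReal.ofReal_lt_top)]
  simp only [ENNReal.toReal_ofReal (h_density _)]

lemma integrable_expMeasure_iff {E : Type*} [NormedAddCommGroup E] [NormedSpace ℝ E] (hr : 0 ≤ r)
    {f : ℝ → E} :
    Integrable f (expMeasure r) ↔
      IntegrableOn (fun t ↦ (r * Real.exp (-(r * t))) • f t) (Ioi 0) := by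
  have h_density (t : ℝ) : 0 ≤ r * Real.exp (-(r * t)) := by positivity
  rw [expMeasure_eq_withDensity_restrict_Ioi, integrable_withDensity_iff_integrable_smul'
    (by fun_prop) (ae_of_all _ fun _ ↦ ENNReal.ofReal_lt_top)]
  simp only [ENNReal.toReal_ofReal (h_density _), IntegrableOn]

/-- The average `∫₀^∞ r e^{-rt} y (t + s) dt` of the future of `y` from time `s`, discounted
exponentially at rate `r > 0`. -/
noncomputable def discountedAverage (r : ℝ) (y : ℝ → ℝ) (s : ℝ) : ℝ :=
  ∫ t, y (t + s) ∂expMeasure r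

lemma discountedAverage_eq_exp_mul_sub (hr : 0 ≤ r) {y : ℝ → ℝ}
    (hy : Integrable y (expMeasure r)) {s : ℝ} (hs : 0 ≤ s) :
    discountedAverage r y s = Real.exp (r * s) *
      (discountedAverage r y 0 - ∫ t in (0 : ℝ)..s, r * Real.exp (-(r * t)) * y t) := by
  have h_shift (t : ℝ) : r * Real.exp (-(r * t)) =
      Real.exp (r * s) * (r * Real.exp (-(r * (t + s)))) := by
    rw [mul_left_comm, ← Real.exp_add]
    ring_nf
  have h_subst := (measurePreserving_add_right volume s).setIntegral_preimage_emb
    (measurableEmbedding_addRight s) (fun t ↦ r * Real.exp (-(r * t)) * y t) (Ioi s)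
  rw [preimage_add_const_Ioi, sub_self] at h_subst
  have h_split := intervalIntegral.integral_Ioi_sub_Ioi ((integrable_expMeasure_iff hr).1 hy) hs
  simp only [smul_eq_mul] at h_split
  simp only [discountedAverage, integral_expMeasure hr, smul_eq_mul, add_zero]
  rw [← h_split, sub_sub_cancel, ← h_subst, ← integral_const_mul]
  exact integral_congr_ae (ae_of_all _ fun t ↦ by simp only [h_shift t, mul_assoc])

lemma discountedAverage_eq_add_integral (hr : 0 ≤ r) {y : ℝ → ℝ}
    (hy : Integrable y (expMeasure r)) {s : ℝ} (hs : 0 ≤ s) :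
    discountedAverage r y s = discountedAverage r y 0 +
      ∫ u in (0 : ℝ)..s, r * (discountedAverage r y u - y u) := by
  set g : ℝ → ℝ := fun t ↦ r * Real.exp (-(r * t)) * y t
  have hg : IntervalIntegrable g volume 0 s :=
    (intervalIntegrable_iff_integrableOn_Ioc_of_le hs).2
      (((integrable_expMeasure_iff hr).1 hy).mono_set Ioc_subset_Ioi_self)
  set growth : ℝ → ℝ := fun u ↦ Real.exp (r * u)
  set tail : ℝ → ℝ := fun u ↦ discountedAverage r y 0 - ∫ t in (0 : ℝ)..u, g t
  have h_growth : AbsolutelyContinuousOnInterval growth 0 s :=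
    ContDiffOn.absolutelyContinuousOnInterval (ContDiff.contDiffOn (by fun_prop))
  have h_tail : AbsolutelyContinuousOnInterval tail 0 s :=
    (contDiffOn_const.absolutelyContinuousOnInterval).sub
      (hg.absolutelyContinuousOnInterval_intervalIntegral left_mem_uIcc)
  have h_eq {u : ℝ} (hu : 0 ≤ u) : discountedAverage r y u = growth u * tail u :=
    discountedAverage_eq_exp_mul_sub hr hy hu
  have h_parts := h_growth.integral_deriv_mul_eq_sub h_tail
  rw [← h_eq hs, ← h_eq le_rfl] at h_parts
  rw [← sub_eq_iff_eq_add', ← h_parts]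
  refine intervalIntegral.integral_congr_ae ?_
  filter_upwards [hg.ae_hasDerivAt_integral] with u hu hus
  have h_deriv_growth : deriv growth u = growth u * r := by
    simpa using ((hasDerivAt_id u).const_mul r).exp.deriv
  have h_deriv_tail : deriv tail u = -g u :=
    ((hu (uIoc_subset_uIcc hus) 0 left_mem_uIcc).const_sub _).deriv
  have h_cancel : growth u * g u = r * y u := by
    simp only [growth, g, Real.exp_neg]
    field_simp
  rw [h_deriv_growth, h_deriv_tail, h_eq (uIoc_of_le hs ▸ hus).1.le]
  linear_combination -h_cancel

end ExponentialAverage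

section DiscountedStationary

variable {Ω : Type*} [MeasurableSpace Ω] {P : Measure Ω} {Y : ℝ → Ω → ℝ} {r : ℝ}

lemma measurable_uncurry_discountedAverage (hr : 0 < r) (hY : Measurable (Function.uncurry Y)) :
    Measurable (Function.uncurry fun s ω ↦ discountedAverage r (Y · ω) s) := by
  have := isProbabilityMeasure_expMeasure hr
  have h_shift : Measurable fun q : (ℝ × Ω) × ℝ ↦ Y (q.2 + q.1.1) q.1.2 :=
    hY.comp (f := fun q : (ℝ × Ω) × ℝ ↦ (q.2 + q.1.1, q.1.2)) (by fun_prop)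
  exact h_shift.stronglyMeasurable.integral_prod_right'.measurable

lemma IsStationaryProcess.integrable_uncurry_shift [SFinite P]
    (hY : IsStationaryProcess Y P)
    (hYm : Measurable (Function.uncurry Y)) (hYi : Integrable (Y 0) P)
    (ν : Measure ℝ) [IsFiniteMeasure ν] (s : ℝ) :
    Integrable (Function.uncurry fun t ω ↦ Y (t + s) ω) (ν.prod P) :=
  integrable_uncurry_of_identDistrib
    (hYm.comp (f := fun p : ℝ × Ω ↦ (p.1 + s, p.2)) (by fun_prop)).aestronglyMeasurable
    (fun t ↦ hY.identDistrib_zero (t + s)) hYi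

lemma IsStationaryProcess.identDistrib_discountedAverage_prodMk [SFinite P] (hr : 0 < r)
    (hY : IsStationaryProcess Y P)
    (hYm : Measurable (Function.uncurry Y)) (hYi : Integrable (Y 0) P) (s : ℝ) :
    IdentDistrib (fun ω ↦ (discountedAverage r (Y · ω) s, Y s ω))
      (fun ω ↦ (discountedAverage r (Y · ω) 0, Y 0 ω)) P P := by
  have := isProbabilityMeasure_expMeasure hr
  have h_shift (s : ℝ) : Measurable (Function.uncurry fun t ω ↦ Y (t + s) ω) :=
    hYm.comp (f := fun p : ℝ × Ω ↦ (p.1 + s, p.2)) (by fun_prop)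
  have h_path := identDistrib_integral_prodMk (h_shift s) (h_shift 0)
    (hY.integrable_uncurry_shift hYm hYi (expMeasure r) s)
    (hY.integrable_uncurry_shift hYm hYi (expMeasure r) 0) ((hY s).trans (hY 0).symm)
  have h_eval : Measurable fun p : ℝ × (ℝ → ℝ) ↦ (p.1, p.2 0) := by fun_prop
  simpa only [Function.comp_def, discountedAverage, zero_add] using h_path.comp h_eval

theorem IsStationaryProcess.condExp_comap_discountedAverage [IsFiniteMeasure P] (hr : 0 < r)
    (hY : IsStationaryProcess Y P)
    (hYm : Measurable (Function.uncurry Y)) (hYi : Integrable (Y 0) P) :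
    P[Y 0 | MeasurableSpace.comap (fun ω ↦ discountedAverage r (Y · ω) 0) inferInstance]
      =ᵐ[P] fun ω ↦ discountedAverage r (Y · ω) 0 := by
  have := isProbabilityMeasure_expMeasure hr
  let Z (s : ℝ) (ω : Ω) : ℝ := discountedAverage r (Y · ω) s
  have hZ : Measurable (Function.uncurry Z) := measurable_uncurry_discountedAverage hr hYm
  have hY_prod := hY.integrable_uncurry_shift hYm hYi (expMeasure r) 0
  have hZi : Integrable (Z 0) P := hY_prod.integral_prod_right
  have h_vel : ∀ᵐ ω ∂P, ∀ s, 0 ≤ s → Z s ω = Z 0 ω + ∫ u in (0 : ℝ)..s, r * (Z u ω - Y u ω) := by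
    filter_upwards [hY_prod.prod_left_ae] with ω hω s hs
    simp only [Function.uncurry_apply_pair, add_zero] at hω
    exact discountedAverage_eq_add_integral hr.le hω hs
  have h_law (s : ℝ) : IdentDistrib (fun ω ↦ (Z s ω, r * (Z s ω - Y s ω)))
      (fun ω ↦ (Z 0 ω, r * (Z 0 ω - Y 0 ω))) P P :=
    (hY.identDistrib_discountedAverage_prodMk hr hYm hYi s).comp
      (u := fun p ↦ (p.1, r * (p.1 - p.2))) (by fun_prop)
  have h_zero : P[r • (Z 0 - Y 0) | MeasurableSpace.comap (Z 0) inferInstance] =ᵐ[P] 0 :=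
    condExp_velocity_ae_eq_zero (V := fun s ω ↦ r * (Z s ω - Y s ω)) hZ
      ((hZ.sub hYm).const_mul r) h_law hZi ((hZi.sub hYi).const_mul r) h_vel
  have h_self : P[Z 0 | MeasurableSpace.comap (Z 0) inferInstance] = Z 0 :=
    condExp_of_stronglyMeasurable hZ.of_uncurry_left.comap_le
      (comap_measurable _).stronglyMeasurable hZi
  filter_upwards [h_zero, condExp_smul r (Z 0 - Y 0) (MeasurableSpace.comap (Z 0) inferInstance),
    condExp_sub hZi hYi (MeasurableSpace.comap (Z 0) inferInstance)] with ω h0 h_smul h_sub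
  rw [h0, Pi.smul_apply, h_sub, h_self, Pi.zero_apply, eq_comm, smul_eq_zero_iff_right hr.ne',
    Pi.sub_apply, sub_eq_zero] at h_smul
  exact h_smul.symm

end DiscountedStationary

/-- Let `(Y_t : t ∈ ℝ)` be a jointly measurable stationary real-valued
process with `E|Y_0| < ∞`, and fix `λ > 0`.  With `Ȳ_λ := ∫₀^∞ λ e^{−λt} Y_t dt`,
one has `E(Y_0 | σ(Ȳ_λ)) = Ȳ_λ` a.s. -/
theorem statement8
    {Ω : Type*} [MeasurableSpace Ω] (P : Measure Ω) [IsProbabilityMeasure P]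
    (Y : ℝ → Ω → ℝ)
    (hY : Measurable fun p : ℝ × Ω => Y p.1 p.2)
    (hstat : ∀ h : ℝ, ∀ (n : ℕ) (t : Fin n → ℝ),
      Measure.map (fun ω (i : Fin n) => Y (t i + h) ω) P
        = Measure.map (fun ω (i : Fin n) => Y (t i) ω) P)
    (hint : Integrable (Y 0) P)
    (l : ℝ) (hl : 0 < l)
    (Ybar : Ω → ℝ)
    (hYbar : ∀ ω, Ybar ω = ∫ t in Set.Ioi (0:ℝ), l * Real.exp (-(l * t)) * Y t ω) :
    P[Y 0 | MeasurableSpace.comap Ybar inferInstance] =ᵐ[P] Ybar := by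
  have hYs : IsStationaryProcess Y P :=
    isStationaryProcess_of_map_fin_eq (fun _ ↦ hY.of_uncurry_left) hstat
  obtain rfl : Ybar = fun ω ↦ discountedAverage l (Y · ω) 0 := by
    funext ω
    simp only [hYbar, discountedAverage, integral_expMeasure hl.le, add_zero, smul_eq_mul]
  exact hYs.condExp_comap_discountedAverage hl hY hint
end
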